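/- Let AN be a well-formed acyclic net. Then: (1) f(AN) = ⋃ f(scenarios(AN)) for f = sseq, mixsseq, reach, fseq (step sequences, mixed step sequences, reachable markings, firing sequences); and (2) f(AN) = ⋃ f(maxscenarios(AN)) for f = maxsseq, maxmixsseq, finreach (maximal step sequences, maximal mixed step sequences, final reachable markings). -/

import Mathlib

/-- A net: a triple of places, transitions, and a flow relation. -/
structure Net (α : Type*) where
  places : Set α
  transitions : Set α
  flow : α → α → Prop

namespace Net

variable {α : Type*}

/-- The set of direct predecessors (preset) of a node. -/
def pre (N : Net α) (x : α) : Set α := {z | N.flow z x}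

/-- The set of direct successors (postset) of a node. -/
def post (N : Net α) (x : α) : Set α := {z | N.flow x z}

/-- Preset of a set of nodes. -/
def preSet (N : Net α) (X : Set α) : Set α := ⋃ x ∈ X, N.pre x

/-- Postset of a set of nodes. -/
def postSet (N : Net α) (X : Set α) : Set α := ⋃ x ∈ X, N.post x

/-- Initial places: places with empty preset. -/
def initPlaces (N : Net α) : Set α := {p ∈ N.places | N.pre p = ∅}

/-- Final places: places with empty postset. -/
def finPlaces (N : Net α) : Set α := {p ∈ N.places | N.post p = ∅}

/-- An acyclic net: places and transitions are disjoint finite sets, places nonempty,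
the flow relation relates only places to transitions and vice versa, is acyclic, and
every transition has at least one pre-place and one post-place. -/
def IsAcyclicNet (N : Net α) : Prop :=
  N.places.Finite ∧ N.transitions.Finite ∧
  Disjoint N.places N.transitions ∧
  (∀ x y, N.flow x y →
    (x ∈ N.places ∧ y ∈ N.transitions) ∨ (x ∈ N.transitions ∧ y ∈ N.places)) ∧
  N.places.Nonempty ∧
  (∀ x, ¬ Relation.TransGen N.flow x x) ∧
  (∀ t ∈ N.transitions, (N.pre t).Nonempty ∧ (N.post t).Nonempty)

/-- An occurrence net: an acyclic net with `|pre p| ≤ 1` and `|post p| ≤ 1` for each place. -/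
def IsOccurrenceNet (N : Net α) : Prop :=
  IsAcyclicNet N ∧ ∀ p ∈ N.places, (N.pre p).Subsingleton ∧ (N.post p).Subsingleton

/-- A backward deterministic acyclic net: an acyclic net with `|pre p| ≤ 1` for each place. -/
def IsBDAN (N : Net α) : Prop :=
  IsAcyclicNet N ∧ ∀ p ∈ N.places, (N.pre p).Subsingleton

/-- `N` is a subnet of `M`: nonempty set of places included, transitions included,
flow is the restriction of that of `M`, and every transition of `N` retains its
full preset and postset from `M`. -/
def IsSubnet (N M : Net α) : Prop :=
  N.places.Nonempty ∧ N.places ⊆ M.places ∧ N.transitions ⊆ M.transitions ∧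
  (∀ x y, N.flow x y ↔ M.flow x y ∧
    ((x ∈ N.places ∧ y ∈ N.transitions) ∨ (x ∈ N.transitions ∧ y ∈ N.places))) ∧
  (∀ t ∈ N.transitions, N.pre t = M.pre t ∧ N.post t = M.post t)

/-- `N` is a co-initial subnet of `M` : a subnet with the same initial places. -/
def CoInitial (N M : Net α) : Prop := IsSubnet N M ∧ N.initPlaces = M.initPlaces

/-- A step: a nonempty set of transitions with pairwise disjoint presets. -/
def IsStep (N : Net α) (U : Set α) : Prop :=
  U.Nonempty ∧ U ⊆ N.transitions ∧ ∀ t ∈ U, ∀ u ∈ U, t ≠ u → N.pre t ∩ N.pre u = ∅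

/-- A step `U` is enabled at marking `M` if all its pre-places are in `M`. -/
def Enabled (N : Net α) (M U : Set α) : Prop := IsStep N U ∧ N.preSet U ⊆ M

/-- Executing an enabled step `U` at `M` yields `M' = (M ∪ post U) \ pre U`. -/
def StepTrans (N : Net α) (M U M' : Set α) : Prop :=
  Enabled N M U ∧ M' = (M ∪ N.postSet U) \ N.preSet U

/-- Step sequences from a marking to a marking. -/
inductive StepSeqFrom (N : Net α) : Set α → List (Set α) → Set α → Prop
  | nil (M : Set α) : StepSeqFrom N M [] M
  | cons {M U M' σ M''} : StepTrans N M U M' → StepSeqFrom N M' σ M'' →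
      StepSeqFrom N M (U :: σ) M''

/-- The initial marking: the set of initial places. -/
def initMarking (N : Net α) : Set α := N.initPlaces

/-- Step sequences executable from the initial marking. -/
def sseq (N : Net α) : Set (List (Set α)) := {σ | ∃ M, StepSeqFrom N N.initMarking σ M}

/-- Mixed step sequences: alternating steps and resulting markings from a marking. -/
inductive MixFrom (N : Net α) : Set α → List (Set α × Set α) → Prop
  | nil (M : Set α) : MixFrom N M []
  | cons {M U M' l} : StepTrans N M U M' → MixFrom N M' l → MixFrom N M ((U, M') :: l)

/-- Mixed step sequences from the initial marking, represented as the initial marking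
paired with the list of consecutive (step, marking) pairs. -/
def mixsseq (N : Net α) : Set (Set α × List (Set α × Set α)) :=
  {p | p.1 = N.initMarking ∧ MixFrom N p.1 p.2}

/-- Markings reachable from the initial marking. -/
def reach (N : Net α) : Set (Set α) := {M | ∃ σ, StepSeqFrom N N.initMarking σ M}

/-- Firing sequences: step sequences all of whose steps are singletons. -/
def fseq (N : Net α) : Set (List (Set α)) :=
  {σ | σ ∈ N.sseq ∧ ∀ U ∈ σ, ∃ t, U = {t}}

/-- Maximal step sequences: no step can be appended. -/
def maxsseq (N : Net α) : Set (List (Set α)) :=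
  {σ | σ ∈ N.sseq ∧ ¬ ∃ U, σ ++ [U] ∈ N.sseq}

/-- Maximal mixed step sequences: no step and marking can be appended. -/
def maxmixsseq (N : Net α) : Set (Set α × List (Set α × Set α)) :=
  {p | p ∈ N.mixsseq ∧ ¬ ∃ U M, (p.1, p.2 ++ [(U, M)]) ∈ N.mixsseq}

/-- Final reachable markings: markings reached by maximal step sequences. -/
def finreach (N : Net α) : Set (Set α) :=
  {M | ∃ σ ∈ N.maxsseq, StepSeqFrom N N.initMarking σ M}

/-- A step sequence is well-formed if post-sets of distinct transitions in the same
step are disjoint, and post-sets of distinct steps are disjoint. -/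
def WellFormedSeq (N : Net α) (σ : List (Set α)) : Prop :=
  (∀ U ∈ σ, ∀ t ∈ U, ∀ u ∈ U, t ≠ u → N.post t ∩ N.post u = ∅) ∧
  σ.Pairwise (fun U V => N.postSet U ∩ N.postSet V = ∅)

/-- The set of transitions occurring in a step sequence. -/
def transOf (σ : List (Set α)) : Set α := {t | ∃ U ∈ σ, t ∈ U}

/-- A net is well-formed if each transition occurs in at least one step sequence and
all step sequences are well-formed. -/
def WellFormedNet (N : Net α) : Prop :=
  (∀ t ∈ N.transitions, ∃ σ ∈ N.sseq, t ∈ transOf σ) ∧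
  (∀ σ ∈ N.sseq, N.WellFormedSeq σ)

/-- Scenarios of a net: occurrence nets that are co-initial subnets of it. -/
def scenarios (N : Net α) : Set (Net α) :=
  {S | IsOccurrenceNet S ∧ CoInitial S N}

/-- Maximal scenarios: scenarios not strictly included (co-initially) in another scenario. -/
def maxscenarios (N : Net α) : Set (Net α) :=
  {S | S ∈ N.scenarios ∧ ¬ ∃ S', S' ∈ N.scenarios ∧ S' ≠ S ∧ CoInitial S S'}

/-- The scenario induced by a (well-formed) step sequence `σ`:
transitions are those occurring in `σ`, places are the initial places together with
the postsets of those transitions, and the flow is the restriction. -/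
def inducedScenario (N : Net α) (σ : List (Set α)) : Net α where
  places := N.initMarking ∪ N.postSet (transOf σ)
  transitions := transOf σ
  flow := fun x y => N.flow x y ∧
    ((x ∈ N.initMarking ∪ N.postSet (transOf σ) ∧ y ∈ transOf σ) ∨
     (x ∈ transOf σ ∧ y ∈ N.initMarking ∪ N.postSet (transOf σ)))

end Net

/-! In a well-formed run each transition fires only once and no place is filled twice, so the
marking reached is `(P^init ∪ post X) \ pre X`, where `X` is the set of transitions fired, and the
transitions in `X` have pairwise disjoint presets and postsets. Hence the subnet spanned by `X` is a
scenario in which the run can be replayed. Conversely, a scenario is determined by its transitions,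
and a run of it which misses some transition can be continued by any causally minimal missing one.
So a run `σ` is maximal in a scenario exactly when that scenario is the one induced by `σ`, which
turns maximality of the runs of the net into maximality of the scenarios they induce. -/

namespace Net

variable {α : Type*} {N S S' : Net α} {M M' U X Y : Set α} {σ τ : List (Set α)} {t p : α}

section Presets

theorem mem_preSet : p ∈ N.preSet X ↔ ∃ t ∈ X, p ∈ N.pre t := by
  simp [preSet]

theorem mem_postSet : p ∈ N.postSet X ↔ ∃ t ∈ X, p ∈ N.post t := by
  simp [postSet]

theorem pre_subset_preSet (ht : t ∈ X) : N.pre t ⊆ N.preSet X :=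
  Set.subset_biUnion_of_mem ht

theorem post_subset_postSet (ht : t ∈ X) : N.post t ⊆ N.postSet X :=
  Set.subset_biUnion_of_mem ht

theorem preSet_union : N.preSet (X ∪ Y) = N.preSet X ∪ N.preSet Y :=
  Set.biUnion_union X Y N.pre

theorem postSet_union : N.postSet (X ∪ Y) = N.postSet X ∪ N.postSet Y :=
  Set.biUnion_union X Y N.post

theorem disjoint_initMarking_postSet : Disjoint N.initMarking (N.postSet X) := by
  refine Set.disjoint_left.2 fun p hp hpX => ?_
  obtain ⟨t, -, htp⟩ := mem_postSet.1 hpX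
  exact (hp.2 ▸ htp : t ∈ (∅ : Set α))

end Presets

section AcyclicNets

theorem IsAcyclicNet.pre_subset_places (h : N.IsAcyclicNet) (ht : t ∈ N.transitions) :
    N.pre t ⊆ N.places := by
  obtain ⟨-, -, hdisj, hflow, -⟩ := h
  intro p hp
  rcases hflow p t hp with ⟨hpP, -⟩ | ⟨-, htP⟩
  · exact hpP
  · exact (Set.disjoint_left.1 hdisj htP ht).elim

theorem IsAcyclicNet.post_subset_places (h : N.IsAcyclicNet) (ht : t ∈ N.transitions) :
    N.post t ⊆ N.places := by
  obtain ⟨-, -, hdisj, hflow, -⟩ := h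
  intro p hp
  rcases hflow t p hp with ⟨htP, -⟩ | ⟨-, hpP⟩
  · exact (Set.disjoint_left.1 hdisj htP ht).elim
  · exact hpP

theorem IsAcyclicNet.pre_subset_transitions (h : N.IsAcyclicNet) (hp : p ∈ N.places) :
    N.pre p ⊆ N.transitions := by
  obtain ⟨-, -, hdisj, hflow, -⟩ := h
  intro t ht
  rcases hflow t p ht with ⟨-, hpT⟩ | ⟨htT, -⟩
  · exact (Set.disjoint_left.1 hdisj hp hpT).elim
  · exact htT

theorem IsAcyclicNet.post_subset_transitions (h : N.IsAcyclicNet) (hp : p ∈ N.places) :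
    N.post p ⊆ N.transitions := by
  obtain ⟨-, -, hdisj, hflow, -⟩ := h
  intro t ht
  rcases hflow p t ht with ⟨-, htT⟩ | ⟨hpT, -⟩
  · exact htT
  · exact (Set.disjoint_left.1 hdisj hp hpT).elim

theorem IsAcyclicNet.pre_nonempty (h : N.IsAcyclicNet) (ht : t ∈ N.transitions) :
    (N.pre t).Nonempty :=
  (h.2.2.2.2.2.2 t ht).1

theorem IsAcyclicNet.places_eq (h : N.IsAcyclicNet) :
    N.places = N.initPlaces ∪ N.postSet N.transitions := by
  refine Set.Subset.antisymm (fun p hp => ?_) (Set.union_subset (fun p hp => hp.1) ?_)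
  · rcases (N.pre p).eq_empty_or_nonempty with hpre | ⟨t, ht⟩
    · exact Or.inl ⟨hp, hpre⟩
    · exact Or.inr (mem_postSet.2 ⟨t, h.pre_subset_transitions hp ht, ht⟩)
  · exact Set.iUnion₂_subset fun t ht => h.post_subset_places ht

theorem IsAcyclicNet.exists_transGen_minimal (h : N.IsAcyclicNet) (hX : X.Finite)
    (hne : X.Nonempty) : ∃ x ∈ X, ∀ y ∈ X, ¬ Relation.TransGen N.flow y x := by
  have : IsStrictOrder α (Relation.TransGen N.flow) :=
    { irrefl := h.2.2.2.2.2.1, trans := fun _ _ _ => Relation.TransGen.trans }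
  obtain ⟨x, -, hx⟩ := WellFounded.has_min (hX.wellFoundedOn (r := Relation.TransGen N.flow))
    Set.univ ⟨⟨_, hne.some_mem⟩, trivial⟩
  exact ⟨x, x.2, fun y hy => hx ⟨y, hy⟩ trivial⟩

theorem IsAcyclicNet.initPlaces_nonempty (h : N.IsAcyclicNet) : N.initPlaces.Nonempty := by
  obtain ⟨p, hp, hmin⟩ := h.exists_transGen_minimal h.1 h.2.2.2.2.1
  refine ⟨p, hp, Set.eq_empty_of_forall_notMem fun t htp => ?_⟩
  have ht := h.pre_subset_transitions hp htp
  obtain ⟨q, hqt⟩ := h.pre_nonempty ht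
  exact hmin q (h.pre_subset_places ht hqt) (.tail (.single hqt) htp)

theorem IsAcyclicNet.pairwiseDisjoint_post_iff (h : N.IsAcyclicNet) :
    N.transitions.PairwiseDisjoint N.post ↔ ∀ p ∈ N.places, (N.pre p).Subsingleton := by
  rw [Set.pairwiseDisjoint_iff]
  constructor
  · intro hpost p hp t ht u hu
    exact hpost (h.pre_subset_transitions hp ht) (h.pre_subset_transitions hp hu) ⟨p, ht, hu⟩
  · rintro hpre t ht u - ⟨p, htp, hup⟩
    exact hpre p (h.post_subset_places ht htp) htp hup

theorem IsAcyclicNet.pairwiseDisjoint_pre_iff (h : N.IsAcyclicNet) :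
    N.transitions.PairwiseDisjoint N.pre ↔ ∀ p ∈ N.places, (N.post p).Subsingleton := by
  rw [Set.pairwiseDisjoint_iff]
  constructor
  · intro hpre p hp t ht u hu
    exact hpre (h.post_subset_transitions hp ht) (h.post_subset_transitions hp hu) ⟨p, ht, hu⟩
  · rintro hpost t ht u - ⟨p, hpt, hpu⟩
    exact hpost p (h.pre_subset_places ht hpt) hpt hpu

theorem isOccurrenceNet_iff : N.IsOccurrenceNet ↔ N.IsAcyclicNet ∧
    N.transitions.PairwiseDisjoint N.pre ∧ N.transitions.PairwiseDisjoint N.post := by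
  refine and_congr_right fun h => ?_
  rw [h.pairwiseDisjoint_pre_iff, h.pairwiseDisjoint_post_iff]
  grind

theorem IsOccurrenceNet.isBDAN (h : N.IsOccurrenceNet) : N.IsBDAN :=
  ⟨h.1, fun p hp => (h.2 p hp).1⟩

end AcyclicNets

section StepSequences

@[simp]
theorem transOf_nil : transOf ([] : List (Set α)) = ∅ := by
  simp [transOf]

@[simp]
theorem transOf_cons : transOf (U :: σ) = U ∪ transOf σ := by
  ext t
  simp [transOf]

@[simp]
theorem transOf_append : transOf (σ ++ τ) = transOf σ ∪ transOf τ := by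
  induction σ with
  | nil => simp
  | cons V σ ih => simp [ih, Set.union_assoc]

@[simp]
theorem stepSeqFrom_nil_iff : StepSeqFrom N M [] M' ↔ M = M' :=
  ⟨fun h => by cases h; rfl, fun h => h ▸ .nil M⟩

@[simp]
theorem stepSeqFrom_cons_iff :
    StepSeqFrom N M (U :: σ) M' ↔ ∃ L, StepTrans N M U L ∧ StepSeqFrom N L σ M' :=
  ⟨fun h => by cases h with | cons hU hσ => exact ⟨_, hU, hσ⟩, fun ⟨_, hU, hσ⟩ => .cons hU hσ⟩

theorem stepSeqFrom_append_iff :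
    StepSeqFrom N M (σ ++ τ) M' ↔ ∃ L, StepSeqFrom N M σ L ∧ StepSeqFrom N L τ M' := by
  induction σ generalizing M with
  | nil => simp
  | cons V σ ih =>
    simp only [List.cons_append, stepSeqFrom_cons_iff, ih]
    grind

theorem stepSeqFrom_append_singleton_iff :
    StepSeqFrom N M (σ ++ [U]) M' ↔ ∃ L, StepSeqFrom N M σ L ∧ StepTrans N L U M' := by
  simp [stepSeqFrom_append_iff]

theorem StepSeqFrom.transOf_subset (hs : StepSeqFrom N M σ M') : transOf σ ⊆ N.transitions := by
  induction hs with
  | nil => simp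
  | cons hU _ ih => simpa using ⟨hU.1.1.2.1, ih⟩

theorem StepSeqFrom.preSet_subset (hs : StepSeqFrom N M σ M') :
    N.preSet (transOf σ) ⊆ M ∪ N.postSet (transOf σ) := by
  induction hs with
  | nil => simp [preSet]
  | cons hU _ ih =>
    obtain ⟨⟨-, hUM⟩, rfl⟩ := hU
    rw [transOf_cons, preSet_union, postSet_union]
    refine Set.union_subset (hUM.trans Set.subset_union_left) (ih.trans ?_)
    grind

end StepSequences

section WellFormedSequences

theorem wellFormedSeq_append_singleton_iff :
    N.WellFormedSeq (σ ++ [U]) ↔ N.WellFormedSeq σ ∧ U.PairwiseDisjoint N.post ∧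
      Disjoint (N.postSet (transOf σ)) (N.postSet U) := by
  have hU : U.PairwiseDisjoint N.post ↔ ∀ t ∈ U, ∀ u ∈ U, t ≠ u → N.post t ∩ N.post u = ∅ := by
    simp only [Set.PairwiseDisjoint, Set.Pairwise, Function.onFun, Set.disjoint_iff_inter_eq_empty]
  have hσ : Disjoint (N.postSet (transOf σ)) (N.postSet U) ↔
      ∀ V ∈ σ, N.postSet V ∩ N.postSet U = ∅ := by
    simp only [Set.disjoint_left, Set.eq_empty_iff_forall_notMem, Set.mem_inter_iff, mem_postSet,
      transOf, Set.mem_ofPred_eq]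
    grind
  simp only [WellFormedSeq, List.pairwise_append, List.mem_append, List.mem_singleton, hU, hσ]
  grind

theorem StepSeqFrom.marking_eq (hs : StepSeqFrom N M σ M') (hσ : N.WellFormedSeq σ)
    (hM : Disjoint M (N.postSet (transOf σ))) :
    M' = (M ∪ N.postSet (transOf σ)) \ N.preSet (transOf σ) := by
  induction σ using List.reverseRecOn generalizing M' with
  | nil => simp_all [preSet, postSet]
  | append_singleton σ U ih =>
    obtain ⟨L, hL, -, rfl⟩ := stepSeqFrom_append_singleton_iff.1 hs
    obtain ⟨hσ, -, hdisj⟩ := wellFormedSeq_append_singleton_iff.1 hσ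
    simp only [transOf_append, transOf_cons, transOf_nil, Set.union_empty, postSet_union,
      preSet_union, Set.disjoint_union_right] at hM ⊢
    have hpre : Disjoint (N.preSet (transOf σ)) (N.postSet U) :=
      (hM.2.union_left hdisj).mono_left hL.preSet_subset
    rw [ih hL hσ hM.1]
    grind

theorem StepSeqFrom.disjoint_preSet (hs : StepSeqFrom N M σ M') (hσ : N.WellFormedSeq σ)
    (hM : Disjoint M (N.postSet (transOf σ))) : Disjoint M' (N.preSet (transOf σ)) :=
  hs.marking_eq hσ hM ▸ Set.disjoint_sdiff_left

theorem StepSeqFrom.pairwiseDisjoint_pre (hs : StepSeqFrom N M σ M') (hσ : N.WellFormedSeq σ)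
    (hM : Disjoint M (N.postSet (transOf σ))) : (transOf σ).PairwiseDisjoint N.pre := by
  induction σ using List.reverseRecOn generalizing M' with
  | nil => simp
  | append_singleton σ U ih =>
    obtain ⟨L, hL, ⟨⟨-, -, hU⟩, hUL⟩, -⟩ := stepSeqFrom_append_singleton_iff.1 hs
    obtain ⟨hσ, -⟩ := wellFormedSeq_append_singleton_iff.1 hσ
    simp only [transOf_append, transOf_cons, transOf_nil, Set.union_empty, postSet_union,
      Set.disjoint_union_right] at hM ⊢
    refine Set.pairwiseDisjoint_union.2 ⟨ih hL hσ hM.1, ?_, fun t ht u hu _ => ?_⟩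
    · exact fun t ht u hu htu => Set.disjoint_iff_inter_eq_empty.2 (hU t ht u hu htu)
    · exact ((hL.disjoint_preSet hσ hM.1).mono_left hUL).symm.mono
        (pre_subset_preSet ht) (pre_subset_preSet hu)

theorem WellFormedSeq.pairwiseDisjoint_post (hσ : N.WellFormedSeq σ) :
    (transOf σ).PairwiseDisjoint N.post := by
  induction σ using List.reverseRecOn with
  | nil => simp
  | append_singleton σ U ih =>
    obtain ⟨hσ, hU, hdisj⟩ := wellFormedSeq_append_singleton_iff.1 hσ
    simp only [transOf_append, transOf_cons, transOf_nil, Set.union_empty]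
    exact Set.pairwiseDisjoint_union.2 ⟨ih hσ, hU, fun t ht u hu _ =>
      hdisj.mono (post_subset_postSet ht) (post_subset_postSet hu)⟩

theorem IsAcyclicNet.disjoint_transOf_of_enabled (h : N.IsAcyclicNet)
    (hs : StepSeqFrom N N.initMarking σ M) (hσ : N.WellFormedSeq σ) (hU : N.Enabled M U) :
    Disjoint (transOf σ) U := by
  refine Set.disjoint_left.2 fun t htσ htU => ?_
  obtain ⟨p, hp⟩ := h.pre_nonempty (hU.1.2.1 htU)
  exact Set.disjoint_left.1 (hs.disjoint_preSet hσ disjoint_initMarking_postSet)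
    (hU.2 (pre_subset_preSet htU hp)) (pre_subset_preSet htσ hp)

theorem IsBDAN.wellFormedSeq (h : N.IsBDAN) (hσ : σ ∈ N.sseq) : N.WellFormedSeq σ := by
  have hpost := h.1.pairwiseDisjoint_post_iff.2 h.2
  obtain ⟨M, hs⟩ := hσ
  induction σ using List.reverseRecOn generalizing M with
  | nil => simp [WellFormedSeq]
  | append_singleton σ U ih =>
    obtain ⟨L, hL, hU, -⟩ := stepSeqFrom_append_singleton_iff.1 hs
    have hσ := ih L hL
    have hUT := hU.1.2.1
    refine wellFormedSeq_append_singleton_iff.2 ⟨hσ, hpost.subset hUT, ?_⟩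
    refine Set.disjoint_iUnion₂_left.2 fun t ht => Set.disjoint_iUnion₂_right.2 fun u hu => ?_
    exact hpost (hL.transOf_subset ht) (hUT hu)
      ((h.1.disjoint_transOf_of_enabled hL hσ hU).ne_of_mem ht hu)

end WellFormedSequences

section OccurrenceNets

theorem IsOccurrenceNet.exists_append_mem_sseq (h : N.IsOccurrenceNet) (hσ : σ ∈ N.sseq)
    (hne : transOf σ ≠ N.transitions) : ∃ U, σ ++ [U] ∈ N.sseq := by
  have hwf := h.isBDAN.wellFormedSeq hσ
  obtain ⟨hac, hpre, -⟩ := isOccurrenceNet_iff.1 h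
  obtain ⟨M, hs⟩ := hσ
  obtain ⟨t, ⟨htT, htσ⟩, hmin⟩ := hac.exists_transGen_minimal
    (hac.2.1.subset (Set.sdiff_subset (t := transOf σ)))
    (Set.nonempty_of_ssubset (hs.transOf_subset.ssubset_of_ne hne))
  have henabled : N.pre t ⊆ M := by
    rw [hs.marking_eq hwf disjoint_initMarking_postSet]
    refine fun p hpt => ⟨?_, fun hpσ => ?_⟩
    · rcases hac.places_eq.subset (hac.pre_subset_places htT hpt) with hp | hp
      · exact Or.inl hp
      · obtain ⟨u, huT, hup⟩ := mem_postSet.1 hp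
        have huσ : u ∈ transOf σ := by
          by_contra huσ
          exact hmin u ⟨huT, huσ⟩ (.tail (.single hup) hpt)
        exact Or.inr (post_subset_postSet huσ hup)
    · obtain ⟨u, huσ, hpu⟩ := mem_preSet.1 hpσ
      have htu : t = u :=
        Set.pairwiseDisjoint_iff.1 hpre htT (hs.transOf_subset huσ) ⟨p, hpt, hpu⟩
      exact htσ (htu ▸ huσ)
  have hstep : N.IsStep {t} := by
    simpa [IsStep] using htT
  have hpreSet : N.preSet {t} ⊆ M := by
    simpa [preSet] using henabled
  exact ⟨{t}, _, stepSeqFrom_append_singleton_iff.2 ⟨M, hs, ⟨hstep, hpreSet⟩, rfl⟩⟩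

theorem IsOccurrenceNet.mem_maxsseq_iff (h : N.IsOccurrenceNet) :
    σ ∈ N.maxsseq ↔ σ ∈ N.sseq ∧ transOf σ = N.transitions := by
  refine and_congr_right fun hσ => ⟨fun hmax => ?_, ?_⟩
  · by_contra hne
    exact hmax (h.exists_append_mem_sseq hσ hne)
  · rintro heq ⟨U, M, hU⟩
    obtain ⟨L, hL, hU, -⟩ := stepSeqFrom_append_singleton_iff.1 hU
    obtain ⟨t, ht⟩ := hU.1.1
    exact Set.disjoint_left.1
      (h.1.disjoint_transOf_of_enabled hL (h.isBDAN.wellFormedSeq hσ) hU)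
      (heq ▸ hU.1.2.1 ht) ht

end OccurrenceNets

section MixedSequences

variable {l : List (Set α × Set α)}

@[simp]
theorem mixFrom_nil : MixFrom N M [] :=
  .nil M

@[simp]
theorem mixFrom_cons_iff :
    MixFrom N M ((U, M') :: l) ↔ StepTrans N M U M' ∧ MixFrom N M' l :=
  ⟨fun h => by cases h with | cons hU hl => exact ⟨hU, hl⟩, fun ⟨hU, hl⟩ => .cons hU hl⟩

theorem MixFrom.exists_stepSeqFrom (h : MixFrom N M l) :
    ∃ M', StepSeqFrom N M (l.map Prod.fst) M' := by
  induction h with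
  | nil M => exact ⟨M, .nil M⟩
  | cons hU _ ih => exact ih.imp fun _ hl => .cons hU hl

theorem map_fst_mem_sseq {q : Set α × List (Set α × Set α)} (hq : q ∈ N.mixsseq) :
    q.2.map Prod.fst ∈ N.sseq := by
  obtain ⟨hM, hl⟩ := hq
  rw [hM] at hl
  exact hl.exists_stepSeqFrom

theorem mixFrom_append_singleton_iff :
    MixFrom N M (l ++ [(U, M')]) ↔
      MixFrom N M l ∧ StepSeqFrom N M (l.map Prod.fst ++ [U]) M' := by
  induction l generalizing M with
  | nil => simp
  | cons q l ih =>
    obtain ⟨V, L⟩ := q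
    simp only [List.cons_append, List.map_cons, mixFrom_cons_iff, stepSeqFrom_cons_iff, ih]
    grind [StepTrans]

theorem mem_maxmixsseq_iff {q : Set α × List (Set α × Set α)} :
    q ∈ N.maxmixsseq ↔ q ∈ N.mixsseq ∧ q.2.map Prod.fst ∈ N.maxsseq := by
  obtain ⟨M, l⟩ := q
  refine and_congr_right fun ⟨(hM : M = N.initMarking), (hl : MixFrom N M l)⟩ => ?_
  subst hM
  simp [mixsseq, sseq, maxsseq, mixFrom_append_singleton_iff, hl, hl.exists_stepSeqFrom]

end MixedSequences

section Subnets

theorem IsSubnet.pre_eq (h : S.IsSubnet N) (ht : t ∈ S.transitions) : S.pre t = N.pre t :=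
  (h.2.2.2.2 t ht).1

theorem IsSubnet.post_eq (h : S.IsSubnet N) (ht : t ∈ S.transitions) : S.post t = N.post t :=
  (h.2.2.2.2 t ht).2

theorem IsSubnet.preSet_eq (h : S.IsSubnet N) (hX : X ⊆ S.transitions) :
    S.preSet X = N.preSet X :=
  Set.iUnion₂_congr fun _ ht => h.pre_eq (hX ht)

theorem IsSubnet.postSet_eq (h : S.IsSubnet N) (hX : X ⊆ S.transitions) :
    S.postSet X = N.postSet X :=
  Set.iUnion₂_congr fun _ ht => h.post_eq (hX ht)

theorem IsSubnet.isAcyclicNet (h : S.IsSubnet N) (hN : N.IsAcyclicNet) : S.IsAcyclicNet := by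
  obtain ⟨hne, hP, hT, hflow, hprepost⟩ := h
  obtain ⟨hPfin, hTfin, hdisj, -, -, hacyc, hTne⟩ := hN
  refine ⟨hPfin.subset hP, hTfin.subset hT, hdisj.mono hP hT,
    fun x y hxy => ((hflow x y).1 hxy).2, hne, fun x hx => hacyc x ?_, fun t ht => ?_⟩
  · exact Relation.TransGen.mono (fun x y hxy => ((hflow x y).1 hxy).1) _ _ hx
  · rw [(hprepost t ht).1, (hprepost t ht).2]
    exact hTne t (hT ht)

theorem IsSubnet.isOccurrenceNet (h : S.IsSubnet N) (hN : N.IsAcyclicNet)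
    (hpre : S.transitions.PairwiseDisjoint N.pre)
    (hpost : S.transitions.PairwiseDisjoint N.post) : S.IsOccurrenceNet := by
  refine isOccurrenceNet_iff.2 ⟨h.isAcyclicNet hN, fun t ht u hu htu => ?_,
    fun t ht u hu htu => ?_⟩
  · simpa only [Function.onFun, h.pre_eq ht, h.pre_eq hu] using hpre ht hu htu
  · simpa only [Function.onFun, h.post_eq ht, h.post_eq hu] using hpost ht hu htu

theorem IsSubnet.isStep_iff (h : S.IsSubnet N) :
    S.IsStep U ↔ U ⊆ S.transitions ∧ N.IsStep U := by
  have hT : S.transitions ⊆ N.transitions := h.2.2.1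
  constructor
  · rintro ⟨hne, hU, hdisj⟩
    refine ⟨hU, hne, hU.trans hT, fun t ht u hu htu => ?_⟩
    rw [← h.pre_eq (hU ht), ← h.pre_eq (hU hu), hdisj t ht u hu htu]
  · rintro ⟨hU, hne, -, hdisj⟩
    refine ⟨hne, hU, fun t ht u hu htu => ?_⟩
    rw [h.pre_eq (hU ht), h.pre_eq (hU hu), hdisj t ht u hu htu]

theorem IsSubnet.stepTrans_iff (h : S.IsSubnet N) :
    StepTrans S M U M' ↔ U ⊆ S.transitions ∧ StepTrans N M U M' := by
  simp only [StepTrans, Enabled, h.isStep_iff, and_assoc]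
  refine and_congr_right fun hU => ?_
  rw [h.preSet_eq hU, h.postSet_eq hU]

theorem IsSubnet.stepSeqFrom_iff (h : S.IsSubnet N) :
    StepSeqFrom S M σ M' ↔ transOf σ ⊆ S.transitions ∧ StepSeqFrom N M σ M' := by
  induction σ generalizing M with
  | nil => simp
  | cons U σ ih =>
    simp only [stepSeqFrom_cons_iff, h.stepTrans_iff, ih, transOf_cons, Set.union_subset_iff]
    grind

theorem IsSubnet.mixFrom_iff {l : List (Set α × Set α)} (h : S.IsSubnet N) :
    MixFrom S M l ↔ transOf (l.map Prod.fst) ⊆ S.transitions ∧ MixFrom N M l := by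
  induction l generalizing M with
  | nil => simp
  | cons q l ih =>
    obtain ⟨U, L⟩ := q
    simp only [mixFrom_cons_iff, h.stepTrans_iff, ih, List.map_cons, transOf_cons,
      Set.union_subset_iff]
    grind

theorem CoInitial.stepSeqFrom_initMarking_iff (h : S.CoInitial N) :
    StepSeqFrom S S.initMarking σ M ↔
      transOf σ ⊆ S.transitions ∧ StepSeqFrom N N.initMarking σ M := by
  rw [h.1.stepSeqFrom_iff, initMarking, h.2, initMarking]

theorem CoInitial.mem_sseq_iff (h : S.CoInitial N) :
    σ ∈ S.sseq ↔ transOf σ ⊆ S.transitions ∧ σ ∈ N.sseq := by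
  simp [sseq, h.stepSeqFrom_initMarking_iff]

theorem CoInitial.mem_mixsseq_iff {q : Set α × List (Set α × Set α)} (h : S.CoInitial N) :
    q ∈ S.mixsseq ↔ transOf (q.2.map Prod.fst) ⊆ S.transitions ∧ q ∈ N.mixsseq := by
  simp only [mixsseq, Set.mem_ofPred_eq, h.1.mixFrom_iff, initMarking, h.2]
  tauto

theorem CoInitial.places_eq (h : S.CoInitial N) (hN : N.IsAcyclicNet) :
    S.places = N.initMarking ∪ N.postSet S.transitions := by
  rw [(h.1.isAcyclicNet hN).places_eq, h.2, h.1.postSet_eq subset_rfl, initMarking]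

theorem CoInitial.coInitial_of_transitions_subset (hN : N.IsAcyclicNet) (h : S.CoInitial N)
    (h' : S'.CoInitial N) (hT : S.transitions ⊆ S'.transitions) : S.CoInitial S' := by
  have hP : S.places ⊆ S'.places := by
    rw [h.places_eq hN, h'.places_eq hN]
    exact Set.union_subset_union_right _ (Set.biUnion_subset_biUnion_left hT)
  refine ⟨⟨h.1.1, hP, hT, fun x y => ?_, fun t ht => ?_⟩, h.2.trans h'.2.symm⟩
  · rw [h.1.2.2.2.1, h'.1.2.2.2.1]
    grind
  · rw [h.1.pre_eq ht, h.1.post_eq ht, h'.1.pre_eq (hT ht), h'.1.post_eq (hT ht)]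
    exact ⟨rfl, rfl⟩

theorem CoInitial.eq_inducedScenario (h : S.CoInitial N) (hN : N.IsAcyclicNet)
    (hT : S.transitions = transOf σ) : S = N.inducedScenario σ := by
  have hP := h.places_eq hN
  have hflow := h.1.2.2.2.1
  obtain ⟨P, T, F⟩ := S
  dsimp only at hT hP hflow
  subst hT hP
  simp only [inducedScenario, mk.injEq, true_and]
  exact funext₂ fun x y => propext (hflow x y)

end Subnets

section Scenarios

theorem IsAcyclicNet.inducedScenario_isSubnet (h : N.IsAcyclicNet)
    (hs : StepSeqFrom N N.initMarking σ M) : (N.inducedScenario σ).IsSubnet N := by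
  have hT := hs.transOf_subset
  refine ⟨h.initPlaces_nonempty.mono Set.subset_union_left, ?_, hT, fun _ _ => Iff.rfl,
    fun t ht => ⟨?_, ?_⟩⟩
  · exact Set.union_subset (fun p hp => hp.1)
      (Set.iUnion₂_subset fun t ht => h.post_subset_places (hT ht))
  · exact Set.Subset.antisymm (fun p hp => hp.1)
      fun p hp => ⟨hp, Or.inl ⟨hs.preSet_subset (pre_subset_preSet ht hp), ht⟩⟩
  · exact Set.Subset.antisymm (fun p hp => hp.1)
      fun p hp => ⟨hp, Or.inr ⟨ht, Or.inr (post_subset_postSet ht hp)⟩⟩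

theorem inducedScenario_initPlaces : (N.inducedScenario σ).initPlaces = N.initPlaces := by
  refine Set.Subset.antisymm ?_ fun p hp => ⟨Or.inl hp, ?_⟩
  · rintro p ⟨hp | hp, hpre⟩
    · exact hp
    · obtain ⟨t, ht, htp⟩ := mem_postSet.1 hp
      have htpre : t ∈ (N.inducedScenario σ).pre p := ⟨htp, Or.inr ⟨ht, Or.inr hp⟩⟩
      exact (hpre ▸ htpre : t ∈ (∅ : Set α)).elim
  · exact Set.eq_empty_of_subset_empty fun t ht => hp.2 ▸ ht.1

theorem IsAcyclicNet.inducedScenario_mem_scenarios (h : N.IsAcyclicNet)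
    (hσ : σ ∈ N.sseq) (hwf : N.WellFormedSeq σ) : N.inducedScenario σ ∈ N.scenarios := by
  obtain ⟨M, hs⟩ := hσ
  have hsub := h.inducedScenario_isSubnet hs
  exact ⟨hsub.isOccurrenceNet h (hs.pairwiseDisjoint_pre hwf disjoint_initMarking_postSet)
    hwf.pairwiseDisjoint_post, hsub, inducedScenario_initPlaces⟩

theorem IsAcyclicNet.mem_maxsseq_scenario_iff (h : N.IsAcyclicNet) (hS : S ∈ N.scenarios) :
    σ ∈ S.maxsseq ↔ σ ∈ N.sseq ∧ S = N.inducedScenario σ := by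
  rw [hS.1.mem_maxsseq_iff, hS.2.mem_sseq_iff]
  constructor
  · rintro ⟨⟨-, hσ⟩, hT⟩
    exact ⟨hσ, hS.2.eq_inducedScenario h hT.symm⟩
  · rintro ⟨hσ, rfl⟩
    exact ⟨⟨subset_rfl, hσ⟩, rfl⟩

theorem IsAcyclicNet.mem_maxsseq_iff (h : N.IsAcyclicNet)
    (hwf : ∀ σ ∈ N.sseq, N.WellFormedSeq σ) :
    σ ∈ N.maxsseq ↔ σ ∈ N.sseq ∧ N.inducedScenario σ ∈ N.maxscenarios := by
  refine and_congr_right fun hσ => ?_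
  have hind := h.inducedScenario_mem_scenarios hσ (hwf σ hσ)
  refine ⟨fun hmax => ⟨hind, ?_⟩, ?_⟩
  · rintro ⟨S, hS, hne, hco⟩
    refine hne ((h.mem_maxsseq_scenario_iff hS).1 ⟨?_, ?_⟩).2
    · exact hS.2.mem_sseq_iff.2 ⟨hco.1.2.2.1, hσ⟩
    · exact fun ⟨U, hU⟩ => hmax ⟨U, (hS.2.mem_sseq_iff.1 hU).2⟩
  · rintro ⟨-, hmax⟩ ⟨U, hσU⟩
    have hindU := h.inducedScenario_mem_scenarios hσU (hwf _ hσU)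
    have hT : transOf σ ∪ U = transOf (σ ++ [U]) := by simp
    refine hmax ⟨_, hindU, fun heq => ?_,
      hind.2.coInitial_of_transitions_subset h hindU.2 (Set.subset_union_left.trans hT.le)⟩
    obtain ⟨M, hs⟩ := hσU
    obtain ⟨L, hL, hU, -⟩ := stepSeqFrom_append_singleton_iff.1 hs
    obtain ⟨t, ht⟩ := hU.1.1
    have htσ : t ∈ transOf σ := (hT.trans (congrArg transitions heq)).le (Or.inr ht)
    exact Set.disjoint_left.1 (h.disjoint_transOf_of_enabled hL (hwf σ hσ) hU) htσ ht

end Scenarios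

section Decomposition

theorem IsAcyclicNet.sseq_eq_iUnion_scenarios (h : N.IsAcyclicNet)
    (hwf : ∀ σ ∈ N.sseq, N.WellFormedSeq σ) : N.sseq = ⋃ S ∈ N.scenarios, S.sseq := by
  refine Set.Subset.antisymm (fun σ hσ => ?_)
    (Set.iUnion₂_subset fun S hS σ hσ => (hS.2.mem_sseq_iff.1 hσ).2)
  have hind := h.inducedScenario_mem_scenarios hσ (hwf σ hσ)
  exact Set.mem_biUnion hind (hind.2.mem_sseq_iff.2 ⟨subset_rfl, hσ⟩)

theorem IsAcyclicNet.mixsseq_eq_iUnion_scenarios (h : N.IsAcyclicNet)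
    (hwf : ∀ σ ∈ N.sseq, N.WellFormedSeq σ) : N.mixsseq = ⋃ S ∈ N.scenarios, S.mixsseq := by
  refine Set.Subset.antisymm (fun q hq => ?_)
    (Set.iUnion₂_subset fun S hS q hq => (hS.2.mem_mixsseq_iff.1 hq).2)
  have hσ := map_fst_mem_sseq hq
  have hind := h.inducedScenario_mem_scenarios hσ (hwf _ hσ)
  exact Set.mem_biUnion hind (hind.2.mem_mixsseq_iff.2 ⟨subset_rfl, hq⟩)

theorem IsAcyclicNet.reach_eq_iUnion_scenarios (h : N.IsAcyclicNet)
    (hwf : ∀ σ ∈ N.sseq, N.WellFormedSeq σ) : N.reach = ⋃ S ∈ N.scenarios, S.reach := by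
  refine Set.Subset.antisymm ?_ (Set.iUnion₂_subset ?_)
  · rintro M ⟨σ, hs⟩
    have hind := h.inducedScenario_mem_scenarios ⟨M, hs⟩ (hwf σ ⟨M, hs⟩)
    exact Set.mem_biUnion hind ⟨σ, hind.2.stepSeqFrom_initMarking_iff.2 ⟨subset_rfl, hs⟩⟩
  · rintro S hS M ⟨σ, hs⟩
    exact ⟨σ, (hS.2.stepSeqFrom_initMarking_iff.1 hs).2⟩

theorem IsAcyclicNet.fseq_eq_iUnion_scenarios (h : N.IsAcyclicNet)
    (hwf : ∀ σ ∈ N.sseq, N.WellFormedSeq σ) : N.fseq = ⋃ S ∈ N.scenarios, S.fseq := by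
  ext σ
  simp only [fseq, h.sseq_eq_iUnion_scenarios hwf, Set.mem_iUnion, Set.mem_ofPred_eq, exists_prop]
  tauto

theorem IsAcyclicNet.maxsseq_eq_iUnion_maxscenarios (h : N.IsAcyclicNet)
    (hwf : ∀ σ ∈ N.sseq, N.WellFormedSeq σ) :
    N.maxsseq = ⋃ S ∈ N.maxscenarios, S.maxsseq := by
  ext σ
  simp only [h.mem_maxsseq_iff hwf, Set.mem_iUnion, exists_prop]
  constructor
  · rintro ⟨hσ, hmax⟩
    exact ⟨_, hmax, (h.mem_maxsseq_scenario_iff hmax.1).2 ⟨hσ, rfl⟩⟩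
  · rintro ⟨S, hS, hσS⟩
    obtain ⟨hσ, rfl⟩ := (h.mem_maxsseq_scenario_iff hS.1).1 hσS
    exact ⟨hσ, hS⟩

theorem IsAcyclicNet.maxmixsseq_eq_iUnion_maxscenarios (h : N.IsAcyclicNet)
    (hwf : ∀ σ ∈ N.sseq, N.WellFormedSeq σ) :
    N.maxmixsseq = ⋃ S ∈ N.maxscenarios, S.maxmixsseq := by
  ext q
  simp only [mem_maxmixsseq_iff, h.maxsseq_eq_iUnion_maxscenarios hwf, Set.mem_iUnion, exists_prop]
  constructor
  · rintro ⟨hq, S, hS, hσ⟩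
    have hT := (hS.1.2.mem_sseq_iff.1 hσ.1).1
    exact ⟨S, hS, hS.1.2.mem_mixsseq_iff.2 ⟨hT, hq⟩, hσ⟩
  · rintro ⟨S, hS, hq, hσ⟩
    exact ⟨(hS.1.2.mem_mixsseq_iff.1 hq).2, S, hS, hσ⟩

theorem IsAcyclicNet.finreach_eq_iUnion_maxscenarios (h : N.IsAcyclicNet)
    (hwf : ∀ σ ∈ N.sseq, N.WellFormedSeq σ) :
    N.finreach = ⋃ S ∈ N.maxscenarios, S.finreach := by
  ext M
  simp only [finreach, h.maxsseq_eq_iUnion_maxscenarios hwf, Set.mem_iUnion, Set.mem_ofPred_eq,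
    exists_prop]
  constructor
  · rintro ⟨σ, ⟨S, hS, hσ⟩, hs⟩
    have hT := (hS.1.2.mem_sseq_iff.1 hσ.1).1
    exact ⟨S, hS, σ, hσ, hS.1.2.stepSeqFrom_initMarking_iff.2 ⟨hT, hs⟩⟩
  · rintro ⟨S, hS, σ, hσ, hs⟩
    exact ⟨σ, ⟨S, hS, hσ⟩, (hS.1.2.stepSeqFrom_initMarking_iff.1 hs).2⟩

end Decomposition

end Net

theorem stmt17_general {α : Type*} (N : Net α) (h : N.IsAcyclicNet)
    (hwf : ∀ σ ∈ N.sseq, N.WellFormedSeq σ) :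
    (N.sseq = ⋃ S ∈ N.scenarios, Net.sseq S) ∧
    (N.mixsseq = ⋃ S ∈ N.scenarios, Net.mixsseq S) ∧
    (N.reach = ⋃ S ∈ N.scenarios, Net.reach S) ∧
    (N.fseq = ⋃ S ∈ N.scenarios, Net.fseq S) ∧
    (N.maxsseq = ⋃ S ∈ N.maxscenarios, Net.maxsseq S) ∧
    (N.maxmixsseq = ⋃ S ∈ N.maxscenarios, Net.maxmixsseq S) ∧
    (N.finreach = ⋃ S ∈ N.maxscenarios, Net.finreach S) :=
  ⟨h.sseq_eq_iUnion_scenarios hwf, h.mixsseq_eq_iUnion_scenarios hwf,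
    h.reach_eq_iUnion_scenarios hwf, h.fseq_eq_iUnion_scenarios hwf,
    h.maxsseq_eq_iUnion_maxscenarios hwf, h.maxmixsseq_eq_iUnion_maxscenarios hwf,
    h.finreach_eq_iUnion_maxscenarios hwf⟩

/-- For a well-formed acyclic net:
(1) `f(AN) = ⋃ f(scenarios(AN))` for `f = sseq, mixsseq, reach, fseq`; and
(2) `f(AN) = ⋃ f(maxscenarios(AN))` for `f = maxsseq, maxmixsseq, finreach`. -/
theorem stmt17 {α : Type*} (N : Net α) (h : N.IsAcyclicNet) (hwf : N.WellFormedNet) :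
    (N.sseq = ⋃ S ∈ N.scenarios, Net.sseq S) ∧
    (N.mixsseq = ⋃ S ∈ N.scenarios, Net.mixsseq S) ∧
    (N.reach = ⋃ S ∈ N.scenarios, Net.reach S) ∧
    (N.fseq = ⋃ S ∈ N.scenarios, Net.fseq S) ∧
    (N.maxsseq = ⋃ S ∈ N.maxscenarios, Net.maxsseq S) ∧
    (N.maxmixsseq = ⋃ S ∈ N.maxscenarios, Net.maxmixsseq S) ∧
    (N.finreach = ⋃ S ∈ N.maxscenarios, Net.finreach S) := by
  exact stmt17_general N h hwf.2
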